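/- Fix n ≥ 1 and a Hamiltonian H as in the context, and let a, τ, z be a C^∞ solution of the half-cylinder problem of period n (periodicity, Cauchy–Riemann part, disk part and boundary conditions as in the context) whose λ-energy E_λ is finite. Then in fact E_λ = n; moreover, writing (by the finite-λ-energy normal form) a(s,t) = s + a₀ and τ(s,t) = t + τ₀, the ω-energy E_ω := ∫_0^∞ ∫_0^n [ (∂_s x·∂_t y − ∂_t x·∂_s y) + (∂_s τ·∂_t(H(τ,z)) − ∂_t τ·∂_s(H(τ,z))) ] dt ds (where z = x + iy) equals the Floer energy (1/2)·∫_0^∞ ∫_0^n |∂_s z(s,t)|² + |∂_t z(s,t) − X_H(t+τ₀, z(s,t))|² dt ds. -/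

import Mathlib

open Complex Set MeasureTheory ENNReal

def Disk : Set ℂ := Metric.closedBall 0 1

/-- The Hamiltonian vector field `X_H(t,z) = (−∂_y H, ∂_x H)`, written in complex
notation as `i · (∂_x H + i ∂_y H)`. -/
noncomputable def XH (H : ℝ → ℂ → ℝ) (t : ℝ) (w : ℂ) : ℂ :=
  Complex.I * ((fderiv ℝ (H t) w 1 : ℝ) + (fderiv ℝ (H t) w Complex.I : ℝ) * Complex.I)

/-- Admissible Hamiltonians: smooth, 1-periodic in time, constant on the boundary circle. -/
structure IsAdmissible (H : ℝ → ℂ → ℝ) : Prop where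
  smooth : ContDiff ℝ (⊤ : ℕ∞) (fun p : ℝ × ℂ => H p.1 p.2)
  periodic : ∀ (t : ℝ) (z : ℂ), H (t + 1) z = H t z
  bdry_const : ∀ (t : ℝ), ∀ z w : ℂ, ‖z‖ = 1 → ‖w‖ = 1 → H t z = H t w

/-- The half cylinder `[0,∞) × ℝ`. -/
def HalfPlane : Set (ℝ × ℝ) := Set.Ici (0:ℝ) ×ˢ Set.univ

/-- Partial derivative in the `s`-direction, taken within a set `A`. -/
noncomputable def pds {E : Type*} [NormedAddCommGroup E] [NormedSpace ℝ E]
    (A : Set (ℝ × ℝ)) (f : ℝ × ℝ → E) (p : ℝ × ℝ) : E :=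
  fderivWithin ℝ f A p (1, 0)

/-- Partial derivative in the `t`-direction, taken within a set `A`. -/
noncomputable def pdt {E : Type*} [NormedAddCommGroup E] [NormedSpace ℝ E]
    (A : Set (ℝ × ℝ)) (f : ℝ × ℝ → E) (p : ℝ × ℝ) : E :=
  fderivWithin ℝ f A p (0, 1)

/-- The `λ`-energy of a half cylinder of period `n`:
`E_λ = sup_ψ ∫_0^∞ ∫_0^n ψ(a) (∂_s a ∂_t τ − ∂_t a ∂_s τ) dt ds`, the supremum over all
smooth `ψ : ℝ → [0,∞)` with `∫ ψ = 1`. -/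
noncomputable def lambdaEnergy (n : ℕ) (a τ : ℝ × ℝ → ℝ) : ℝ≥0∞ :=
  ⨆ ψ ∈ {ψ : ℝ → ℝ | ContDiff ℝ (⊤ : ℕ∞) ψ ∧ (∀ x, 0 ≤ ψ x) ∧ ∫ x : ℝ, ψ x = 1},
    ∫⁻ p in Set.Ici (0:ℝ) ×ˢ Set.Ioc (0:ℝ) (n:ℝ),
      ENNReal.ofReal (ψ (a p) *
        (pds HalfPlane a p * pdt HalfPlane τ p - pdt HalfPlane a p * pds HalfPlane τ p))

/-- The `ω`-energy
`E_ω = ∫_0^∞ ∫_0^n (∂_s x ∂_t y − ∂_t x ∂_s y) + (∂_s τ ∂_t(H(τ,z)) − ∂_t τ ∂_s(H(τ,z))) dt ds`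
where `z = x + i y`. -/
noncomputable def omegaEnergy (H : ℝ → ℂ → ℝ) (n : ℕ) (τ : ℝ × ℝ → ℝ)
    (z : ℝ × ℝ → ℂ) : ℝ≥0∞ :=
  ∫⁻ p in Set.Ici (0:ℝ) ×ˢ Set.Ioc (0:ℝ) (n:ℝ),
    ENNReal.ofReal
      ((pds HalfPlane (fun q => (z q).re) p * pdt HalfPlane (fun q => (z q).im) p -
        pdt HalfPlane (fun q => (z q).re) p * pds HalfPlane (fun q => (z q).im) p) +
       (pds HalfPlane τ p * pdt HalfPlane (fun q => H (τ q) (z q)) p -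
        pdt HalfPlane τ p * pds HalfPlane (fun q => H (τ q) (z q)) p))

/-- The Floer energy
`(1/2) ∫_0^∞ ∫_0^n |∂_s z|² + |∂_t z − X_H(t+τ₀, z)|² dt ds`. -/
noncomputable def floerEnergy (H : ℝ → ℂ → ℝ) (n : ℕ) (τ₀ : ℝ)
    (z : ℝ × ℝ → ℂ) : ℝ≥0∞ :=
  (1/2 : ℝ≥0∞) *
    ∫⁻ p in Set.Ici (0:ℝ) ×ˢ Set.Ioc (0:ℝ) (n:ℝ),
      ENNReal.ofReal (‖pds HalfPlane z p‖ ^ 2 +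
        ‖pdt HalfPlane z p - XH H (p.2 + τ₀) (z p)‖ ^ 2)

/-!
For a convex `φ` growing like `|x|` with `φ''` integrable, Stokes' theorem applied to `φ'(a) dτ`
bounds `d/ds ∫ φ(a(s, ·)) dt = ∫ φ'(a) ∂_t τ dt` by the `λ`-energy, so `∫ |a(s, ·)| dt` grows at
most linearly in `s`. On the other hand, `a + iτ - (s + it) - c` is holomorphic, periodic in `t`
and purely imaginary on `s = 0`, so the `k`-th Fourier coefficient of its real part is a multiple
of `sinh (2πks/n)`. Hence all of them vanish and `(a, τ) = (s + c, t + τ₀)`.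

Then `da ∧ dτ = ds ∧ dt`, which gives `E_λ = n`. With `u = ∂_s z - ∂_s τ X_H` and
`v = ∂_t z - ∂_t τ X_H`, the integrand of `E_ω` is `Im (ū v)`, and Floer's equation `u + iv = 0`
turns this into `(|u|² + |v|²) / 2`.
-/

open Filter Asymptotics
open scoped Topology Real ComplexConjugate ContDiff Interval

section HalfPlane

lemma mem_halfPlane {p : ℝ × ℝ} : p ∈ HalfPlane ↔ 0 ≤ p.1 := by simp [HalfPlane]

lemma uniqueDiffOn_halfPlane : UniqueDiffOn ℝ HalfPlane :=
  (uniqueDiffOn_Ici 0).prod uniqueDiffOn_univ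

lemma halfPlane_mem_nhds {p : ℝ × ℝ} (hp : 0 < p.1) : HalfPlane ∈ 𝓝 p :=
  prod_mem_nhds (Ici_mem_nhds hp) univ_mem

lemma halfPlane_subset_closure_interior : HalfPlane ⊆ closure (interior HalfPlane) := by
  simp [HalfPlane, interior_prod_eq, closure_prod_eq]

lemma uIcc_prod_subset_halfPlane {S : ℝ} (hS : 0 ≤ S) (T : ℝ) :
    [[0, S]] ×ˢ [[0, T]] ⊆ HalfPlane := fun p hp => by
  rw [uIcc_of_le hS] at hp
  exact mem_halfPlane.2 hp.1.1

variable {E : Type*} [NormedAddCommGroup E] [NormedSpace ℝ E] {f : ℝ × ℝ → E}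

lemma pds_of_hasFDerivWithinAt {f' : ℝ × ℝ →L[ℝ] E} {p : ℝ × ℝ}
    (hf : HasFDerivWithinAt f f' HalfPlane p) (hp : p ∈ HalfPlane) :
    pds HalfPlane f p = f' (1, 0) := by
  rw [pds, hf.fderivWithin (uniqueDiffOn_halfPlane p hp)]

lemma pdt_of_hasFDerivWithinAt {f' : ℝ × ℝ →L[ℝ] E} {p : ℝ × ℝ}
    (hf : HasFDerivWithinAt f f' HalfPlane p) (hp : p ∈ HalfPlane) :
    pdt HalfPlane f p = f' (0, 1) := by
  rw [pdt, hf.fderivWithin (uniqueDiffOn_halfPlane p hp)]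

lemma contDiffOn_pds {m n : ℕ∞ω} (hf : ContDiffOn ℝ n f HalfPlane) (hmn : m + 1 ≤ n) :
    ContDiffOn ℝ m (pds HalfPlane f) HalfPlane :=
  (hf.fderivWithin uniqueDiffOn_halfPlane hmn).clm_apply contDiffOn_const

lemma contDiffOn_pdt {m n : ℕ∞ω} (hf : ContDiffOn ℝ n f HalfPlane) (hmn : m + 1 ≤ n) :
    ContDiffOn ℝ m (pdt HalfPlane f) HalfPlane :=
  (hf.fderivWithin uniqueDiffOn_halfPlane hmn).clm_apply contDiffOn_const

lemma continuousOn_pds (hf : ContDiffOn ℝ 1 f HalfPlane) :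
    ContinuousOn (pds HalfPlane f) HalfPlane :=
  (contDiffOn_pds (m := 0) hf (by simp)).continuousOn

lemma continuousOn_pdt (hf : ContDiffOn ℝ 1 f HalfPlane) :
    ContinuousOn (pdt HalfPlane f) HalfPlane :=
  (contDiffOn_pdt (m := 0) hf (by simp)).continuousOn

lemma pds_pdt_comm (hf : ContDiffOn ℝ 2 f HalfPlane) {p : ℝ × ℝ} (hp : p ∈ HalfPlane) :
    pds HalfPlane (pdt HalfPlane f) p = pdt HalfPlane (pds HalfPlane f) p := by
  have hf' : HasFDerivWithinAt (fderivWithin ℝ f HalfPlane) _ HalfPlane p :=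
    ((hf.fderivWithin uniqueDiffOn_halfPlane (m := 1) (by norm_num)).differentiableOn
      one_ne_zero p hp).hasFDerivWithinAt
  have hderiv (v : ℝ × ℝ) := hf'.clm_apply (hasFDerivWithinAt_const v p HalfPlane)
  have hsymm : IsSymmSndFDerivWithinAt ℝ f HalfPlane p :=
    (hf p hp).isSymmSndFDerivWithinAt (by simp) uniqueDiffOn_halfPlane
      (halfPlane_subset_closure_interior hp) hp
  calc pds HalfPlane (pdt HalfPlane f) p
      = fderivWithin ℝ (fderivWithin ℝ f HalfPlane) HalfPlane p (1, 0) (0, 1) :=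
        (pds_of_hasFDerivWithinAt (hderiv (0, 1)) hp).trans (by simp)
    _ = fderivWithin ℝ (fderivWithin ℝ f HalfPlane) HalfPlane p (0, 1) (1, 0) :=
        hsymm (1, 0) (0, 1)
    _ = pdt HalfPlane (pds HalfPlane f) p :=
        ((pdt_of_hasFDerivWithinAt (hderiv (1, 0)) hp).trans (by simp)).symm

open scoped Pointwise in
lemma fderivWithin_halfPlane_add_period {T : ℝ} {d : E}
    (hf : ∀ s t : ℝ, 0 ≤ s → f (s, t + T) = f (s, t) + d) {s : ℝ} (hs : 0 ≤ s) (t : ℝ) :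
    fderivWithin ℝ f HalfPlane (s, t + T) = fderivWithin ℝ f HalfPlane (s, t) := by
  have htranslate : ((0 : ℝ), T) +ᵥ HalfPlane = HalfPlane := by
    ext p
    simp [Set.mem_vadd_set_iff_neg_vadd_mem, mem_halfPlane]
  calc fderivWithin ℝ f HalfPlane (s, t + T)
      = fderivWithin ℝ (fun p => f (p + (0, T))) HalfPlane (s, t) := by
        rw [fderivWithin_comp_add_right, htranslate, Prod.mk_add_mk, add_zero]
    _ = fderivWithin ℝ (fun p => f p + d) HalfPlane (s, t) :=
        fderivWithin_congr (fun ⟨x, y⟩ hp => by simpa using hf x y (mem_halfPlane.1 hp))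
          (by simpa using hf s t hs)
    _ = fderivWithin ℝ f HalfPlane (s, t) := fderivWithin_add_const d

/-- The divergence theorem on `[0, S] × ℝ / Tℤ`. -/
theorem integral_pds_add_pdt [CompleteSpace E] {P Q : ℝ × ℝ → E}
    (hP : ContDiffOn ℝ 1 P HalfPlane) (hQ : ContDiffOn ℝ 1 Q HalfPlane) {S T : ℝ} (hS : 0 ≤ S)
    (hQ_per : ∀ s, 0 ≤ s → Q (s, T) = Q (s, 0)) :
    ∫ s in 0..S, ∫ t in 0..T, (pds HalfPlane P (s, t) + pdt HalfPlane Q (s, t)) =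
      (∫ t in 0..T, P (S, t)) - ∫ t in 0..T, P (0, t) := by
  have hsub := uIcc_prod_subset_halfPlane hS T
  have hderiv {f : ℝ × ℝ → E} (hf : ContDiffOn ℝ 1 f HalfPlane) (p : ℝ × ℝ)
      (hp : p ∈ Ioo (min 0 S) (max 0 S) ×ˢ Ioo (min 0 T) (max 0 T)) :
      HasFDerivAt f (fderivWithin ℝ f HalfPlane p) p := by
    have hp₁ : 0 < p.1 := by simpa [hS] using hp.1.1
    exact (hf.differentiableOn one_ne_zero p (mem_halfPlane.2 hp₁.le)).hasFDerivWithinAt.hasFDerivAt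
      (halfPlane_mem_nhds hp₁)
  have hdiv := integral2_divergence_prod_of_hasFDerivAt P Q _ _ 0 0 S T
    (hP.continuousOn.mono hsub) (hQ.continuousOn.mono hsub) (hderiv hP) (hderiv hQ)
    ((((continuousOn_pds hP).add (continuousOn_pdt hQ)).mono hsub).integrableOn_compact
      (isCompact_uIcc.prod isCompact_uIcc))
  have hsides : ∫ s in 0..S, Q (s, T) = ∫ s in 0..S, Q (s, 0) :=
    intervalIntegral.integral_congr fun s hs => hQ_per s (by rw [uIcc_of_le hS] at hs; exact hs.1)
  rw [hsides, sub_self, zero_add] at hdiv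
  exact hdiv

end HalfPlane

section Energy

/-- The Jacobian determinant of `(a, τ)`, i.e. the density of `da ∧ dτ` in the `λ`-energy. -/
noncomputable def jacobian (a τ : ℝ × ℝ → ℝ) (p : ℝ × ℝ) : ℝ :=
  pds HalfPlane a p * pdt HalfPlane τ p - pdt HalfPlane a p * pds HalfPlane τ p

variable {a τ : ℝ × ℝ → ℝ}

lemma jacobian_nonneg {p : ℝ × ℝ} (hCR₁ : pds HalfPlane a p = pdt HalfPlane τ p)
    (hCR₂ : pdt HalfPlane a p = -pds HalfPlane τ p) : 0 ≤ jacobian a τ p := by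
  rw [jacobian, hCR₁, hCR₂]
  nlinarith [sq_nonneg (pdt HalfPlane τ p), sq_nonneg (pds HalfPlane τ p)]

lemma continuousOn_jacobian (ha : ContDiffOn ℝ 1 a HalfPlane) (hτ : ContDiffOn ℝ 1 τ HalfPlane) :
    ContinuousOn (jacobian a τ) HalfPlane :=
  ((continuousOn_pds ha).mul (continuousOn_pdt hτ)).sub
    ((continuousOn_pdt ha).mul (continuousOn_pds hτ))

lemma lintegral_comp_mul_jacobian_le {ψ : ℝ → ℝ} (hψ : ContDiff ℝ (⊤ : ℕ∞) ψ)
    (hψ_nonneg : ∀ x, 0 ≤ ψ x) (hψ_pos : 0 < ∫ x, ψ x) (n : ℕ) :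
    ∫⁻ p in Ici (0 : ℝ) ×ˢ Ioc (0 : ℝ) n, ENNReal.ofReal (ψ (a p) * jacobian a τ p) ≤
      ENNReal.ofReal (∫ x, ψ x) * lambdaEnergy n a τ := by
  set m := ∫ x, ψ x
  calc ∫⁻ p in Ici (0 : ℝ) ×ˢ Ioc (0 : ℝ) n, ENNReal.ofReal (ψ (a p) * jacobian a τ p)
      = ENNReal.ofReal m * ∫⁻ p in Ici (0 : ℝ) ×ˢ Ioc (0 : ℝ) n,
          ENNReal.ofReal (ψ (a p) / m * jacobian a τ p) := by
        rw [← lintegral_const_mul' _ _ ENNReal.ofReal_ne_top]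
        congr! 2 with p
        rw [← ENNReal.ofReal_mul hψ_pos.le]
        field_simp
    _ ≤ ENNReal.ofReal m * lambdaEnergy n a τ := by
        gcongr
        refine le_iSup₂_of_le (fun x => ψ x / m) ⟨hψ.div_const m,
          fun x => div_nonneg (hψ_nonneg x) hψ_pos.le, ?_⟩ le_rfl
        rw [integral_div, div_self hψ_pos.ne']

lemma integral_integral_le_toReal_lintegral {f : ℝ × ℝ → ℝ} (hf : ContinuousOn f HalfPlane)
    (hf_nonneg : ∀ p ∈ HalfPlane, 0 ≤ f p) {S T : ℝ} (hS : 0 ≤ S) (hT : 0 ≤ T)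
    (hfin : ∫⁻ p in Ici (0 : ℝ) ×ˢ Ioc 0 T, ENNReal.ofReal (f p) ≠ ⊤) :
    ∫ s in 0..S, ∫ t in 0..T, f (s, t) ≤
      (∫⁻ p in Ici (0 : ℝ) ×ˢ Ioc 0 T, ENNReal.ofReal (f p)).toReal := by
  have hrect : Ioc 0 S ×ˢ Ioc 0 T ⊆ [[0, S]] ×ˢ [[0, T]] :=
    prod_mono (Ioc_subset_Icc_self.trans Icc_subset_uIcc)
      (Ioc_subset_Icc_self.trans Icc_subset_uIcc)
  have hsub := hrect.trans (uIcc_prod_subset_halfPlane hS T)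
  have hmeas : MeasurableSet (Ioc 0 S ×ˢ Ioc 0 T) := measurableSet_Ioc.prod measurableSet_Ioc
  have hint : IntegrableOn f (Ioc 0 S ×ˢ Ioc 0 T) :=
    ((hf.mono (uIcc_prod_subset_halfPlane hS T)).integrableOn_compact
      (isCompact_uIcc.prod isCompact_uIcc)).mono_set hrect
  calc ∫ s in 0..S, ∫ t in 0..T, f (s, t)
      = ∫ p in Ioc 0 S ×ˢ Ioc 0 T, f p := by
        simp only [intervalIntegral.integral_of_le hS, intervalIntegral.integral_of_le hT]
        exact (setIntegral_prod f hint).symm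
    _ = (∫⁻ p in Ioc 0 S ×ˢ Ioc 0 T, ENNReal.ofReal (f p)).toReal :=
        integral_eq_lintegral_of_nonneg_ae
          (ae_restrict_of_forall_mem hmeas fun p hp => hf_nonneg p (hsub hp)) hint.1
    _ ≤ _ := ENNReal.toReal_mono hfin
        (lintegral_mono_set (prod_mono (fun s hs => hs.1.le) subset_rfl))

lemma integral_comp_mul_jacobian_le (ha : ContDiffOn ℝ 1 a HalfPlane)
    (hτ : ContDiffOn ℝ 1 τ HalfPlane)
    (hCR₁ : ∀ p ∈ HalfPlane, pds HalfPlane a p = pdt HalfPlane τ p)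
    (hCR₂ : ∀ p ∈ HalfPlane, pdt HalfPlane a p = -pds HalfPlane τ p)
    {n : ℕ} (hE : lambdaEnergy n a τ < ⊤) {ψ : ℝ → ℝ} (hψ : ContDiff ℝ (⊤ : ℕ∞) ψ)
    (hψ_nonneg : ∀ x, 0 ≤ ψ x) (hψ_pos : 0 < ∫ x, ψ x) {S : ℝ} (hS : 0 ≤ S) :
    ∫ s in 0..S, ∫ t in (0 : ℝ)..n, ψ (a (s, t)) * jacobian a τ (s, t) ≤
      (∫ x, ψ x) * (lambdaEnergy n a τ).toReal := by
  have hbound := lintegral_comp_mul_jacobian_le (a := a) (τ := τ) hψ hψ_nonneg hψ_pos n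
  have hfin := ENNReal.mul_ne_top (ENNReal.ofReal_ne_top (r := ∫ x, ψ x)) hE.ne
  refine (integral_integral_le_toReal_lintegral
    ((hψ.continuous.comp_continuousOn ha.continuousOn).mul (continuousOn_jacobian ha hτ))
    (fun p hp => mul_nonneg (hψ_nonneg _) (jacobian_nonneg (hCR₁ p hp) (hCR₂ p hp)))
    hS n.cast_nonneg (ne_top_of_le_ne_top hfin hbound)).trans ?_
  rw [← ENNReal.toReal_ofReal hψ_pos.le, ← ENNReal.toReal_mul]
  exact ENNReal.toReal_mono hfin hbound

variable {T : ℝ}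

/-- Stokes' theorem for `d(g(a) dτ) = g'(a) da ∧ dτ`. -/
theorem integral_deriv_comp_mul_jacobian (ha : ContDiffOn ℝ 1 a HalfPlane)
    (hτ : ContDiffOn ℝ 2 τ HalfPlane)
    (ha_per : ∀ s t : ℝ, 0 ≤ s → a (s, t + T) = a (s, t)) {d : ℝ}
    (hτ_per : ∀ s t : ℝ, 0 ≤ s → τ (s, t + T) = τ (s, t) + d)
    {g : ℝ → ℝ} (hg : ContDiff ℝ 1 g) {S : ℝ} (hS : 0 ≤ S) :
    ∫ s in 0..S, ∫ t in 0..T, deriv g (a (s, t)) * jacobian a τ (s, t) =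
      (∫ t in 0..T, g (a (S, t)) * pdt HalfPlane τ (S, t)) -
        ∫ t in 0..T, g (a (0, t)) * pdt HalfPlane τ (0, t) := by
  have hτt : ContDiffOn ℝ 1 (pdt HalfPlane τ) HalfPlane := contDiffOn_pdt hτ (by norm_num)
  have hτs : ContDiffOn ℝ 1 (pds HalfPlane τ) HalfPlane := contDiffOn_pds hτ (by norm_num)
  have hga := hg.comp_contDiffOn ha
  have hderiv {b : ℝ × ℝ → ℝ} (hb : ContDiffOn ℝ 1 b HalfPlane) {p : ℝ × ℝ} (hp : p ∈ HalfPlane) :=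
    (((hg.differentiable one_ne_zero (a p)).hasDerivAt.comp_hasFDerivWithinAt p
      (ha.differentiableOn one_ne_zero p hp).hasFDerivWithinAt).mul
      (hb.differentiableOn one_ne_zero p hp).hasFDerivWithinAt)
  have hdiv {p : ℝ × ℝ} (hp : p ∈ HalfPlane) :
      pds HalfPlane (g ∘ a * pdt HalfPlane τ) p + pdt HalfPlane (-(g ∘ a * pds HalfPlane τ)) p =
        deriv g (a p) * jacobian a τ p := by
    have hs := pds_of_hasFDerivWithinAt (hderiv hτt hp) hp
    have ht := pdt_of_hasFDerivWithinAt (hderiv hτs hp).neg hp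
    have hcomm := pds_pdt_comm hτ hp
    simp only [pds, pdt, add_apply, smul_apply, neg_apply, smul_eq_mul, jacobian,
      Function.comp_apply] at hs ht hcomm ⊢
    linear_combination hs + ht + g (a p) * hcomm
  have hflux_per (s : ℝ) (hs : 0 ≤ s) :
      -(g (a (s, T)) * pds HalfPlane τ (s, T)) = -(g (a (s, 0)) * pds HalfPlane τ (s, 0)) := by
    have ha₀ := ha_per s 0 hs
    have hτ₀ := fderivWithin_halfPlane_add_period hτ_per hs 0
    rw [zero_add] at ha₀ hτ₀
    rw [ha₀, pds, hτ₀, ← pds]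
  refine Eq.trans ?_ (integral_pds_add_pdt (hga.mul hτt) (hga.mul hτs).neg hS hflux_per)
  refine intervalIntegral.integral_congr fun s hs => intervalIntegral.integral_congr fun t _ => ?_
  rw [uIcc_of_le hS] at hs
  exact (hdiv (mem_halfPlane.2 hs.1)).symm

theorem integral_comp_sub_integral_comp (ha : ContDiffOn ℝ 1 a HalfPlane) {g : ℝ → ℝ}
    (hg : ContDiff ℝ 1 g) {S : ℝ} (hS : 0 ≤ S) :
    (∫ t in 0..T, g (a (S, t))) - ∫ t in 0..T, g (a (0, t)) =
      ∫ s in 0..S, ∫ t in 0..T, deriv g (a (s, t)) * pds HalfPlane a (s, t) := by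
  have hderiv {p : ℝ × ℝ} (hp : p ∈ HalfPlane) :
      pds HalfPlane (g ∘ a) p = deriv g (a p) * pds HalfPlane a p :=
    pds_of_hasFDerivWithinAt
      ((hg.differentiable one_ne_zero (a p)).hasDerivAt.comp_hasFDerivWithinAt p
        (ha.differentiableOn one_ne_zero p hp).hasFDerivWithinAt) hp
  refine (integral_pds_add_pdt (Q := fun _ => 0) (hg.comp_contDiffOn ha) contDiffOn_const hS
    fun _ _ => rfl).symm.trans ?_
  refine intervalIntegral.integral_congr fun s hs => intervalIntegral.integral_congr fun t _ => ?_
  rw [uIcc_of_le hS] at hs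
  simp only [hderiv (p := (s, t)) (mem_halfPlane.2 hs.1), pdt, fderivWithin_fun_const,
    Pi.zero_apply, zero_apply, add_zero]

lemma isBigO_integral_comp (ha : ContDiffOn ℝ 1 a HalfPlane) (hτ : ContDiffOn ℝ 2 τ HalfPlane)
    (ha_per : ∀ s t : ℝ, 0 ≤ s → a (s, t + T) = a (s, t)) {d : ℝ}
    (hτ_per : ∀ s t : ℝ, 0 ≤ s → τ (s, t + T) = τ (s, t) + d)
    (hCR₁ : ∀ p ∈ HalfPlane, pds HalfPlane a p = pdt HalfPlane τ p)
    {φ : ℝ → ℝ} (hφ : ContDiff ℝ 2 φ) {K : ℝ}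
    (hK : ∀ S, 0 ≤ S →
      |∫ s in 0..S, ∫ t in 0..T, deriv (deriv φ) (a (s, t)) * jacobian a τ (s, t)| ≤ K) :
    (fun S => ∫ t in 0..T, φ (a (S, t))) =O[atTop] fun S => S := by
  set mean : ℝ → ℝ := fun S => ∫ t in 0..T, φ (a (S, t))
  set slope : ℝ → ℝ := fun s => ∫ t in 0..T, deriv φ (a (s, t)) * pdt HalfPlane τ (s, t)
  have hslope (s : ℝ) (hs : 0 ≤ s) : |slope s| ≤ |slope 0| + K := by
    have hstokes := hK s hs
    rw [integral_deriv_comp_mul_jacobian ha hτ ha_per hτ_per hφ.deriv' hs] at hstokes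
    linarith [abs_sub_abs_le_abs_sub (slope s) (slope 0)]
  have hmean (S : ℝ) (hS : 0 ≤ S) : mean S - mean 0 = ∫ s in 0..S, slope s := by
    refine (integral_comp_sub_integral_comp ha (hφ.of_le one_le_two) hS).trans ?_
    refine intervalIntegral.integral_congr fun s hs => intervalIntegral.integral_congr fun t _ => ?_
    rw [uIcc_of_le hS] at hs
    exact congrArg _ (hCR₁ (s, t) (mem_halfPlane.2 hs.1))
  refine IsBigO.of_bound (|mean 0| + (|slope 0| + K)) ?_
  filter_upwards [eventually_ge_atTop 1] with S hS
  have hS₀ : 0 ≤ S := zero_le_one.trans hS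
  have hint := intervalIntegral.norm_integral_le_of_norm_le_const (a := 0) (b := S) (f := slope)
    fun s hs => hslope s (by rw [uIoc_of_le hS₀] at hs; exact hs.1.le)
  rw [sub_zero, abs_of_nonneg hS₀, ← hmean S hS₀] at hint
  calc ‖mean S‖ ≤ |mean 0| + ‖mean S - mean 0‖ := by
        linarith [abs_sub_abs_le_abs_sub (mean S) (mean 0), Real.norm_eq_abs (mean S),
          Real.norm_eq_abs (mean S - mean 0)]
    _ ≤ |mean 0| * S + (|slope 0| + K) * S :=
        add_le_add (le_mul_of_one_le_right (abs_nonneg _) hS) hint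
    _ = (|mean 0| + (|slope 0| + K)) * ‖S‖ := by rw [Real.norm_of_nonneg hS₀]; ring

end Energy

section JapaneseBracket

/-- The Japanese bracket `⟨x⟩ = √(1 + x²)`, a smooth convex function with integrable second
derivative that dominates `|x|`. -/
noncomputable def japaneseBracket (x : ℝ) : ℝ := √(1 + x ^ 2)

lemma abs_le_japaneseBracket (x : ℝ) : |x| ≤ japaneseBracket x :=
  Real.abs_le_sqrt (by linarith)

lemma one_le_japaneseBracket (x : ℝ) : 1 ≤ japaneseBracket x :=
  Real.one_le_sqrt.2 (by linarith [sq_nonneg x])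

lemma contDiff_japaneseBracket {n : ℕ∞ω} : ContDiff ℝ n japaneseBracket :=
  (contDiff_const.add (contDiff_id.pow 2)).sqrt fun x => by positivity

lemma hasDerivAt_japaneseBracket (x : ℝ) :
    HasDerivAt japaneseBracket (x / japaneseBracket x) x := by
  have hsq : HasDerivAt (fun y : ℝ => 1 + y ^ 2) (2 * x) x := by
    simpa using (hasDerivAt_pow 2 x).const_add 1
  have hsqrt := hsq.sqrt (by positivity)
  rwa [mul_div_mul_left x _ two_ne_zero] at hsqrt

lemma deriv_deriv_japaneseBracket :
    deriv (deriv japaneseBracket) = fun x => (japaneseBracket x ^ 3)⁻¹ := by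
  ext x
  have hpos : 0 < japaneseBracket x := zero_lt_one.trans_le (one_le_japaneseBracket x)
  have hsq : japaneseBracket x ^ 2 = 1 + x ^ 2 := Real.sq_sqrt (by positivity)
  rw [funext fun y => (hasDerivAt_japaneseBracket y).deriv,
    ((hasDerivAt_id' x).fun_div (hasDerivAt_japaneseBracket x) hpos.ne').deriv]
  field_simp
  linear_combination hsq

lemma deriv_deriv_japaneseBracket_pos (x : ℝ) : 0 < deriv (deriv japaneseBracket) x := by
  have hpos : 0 < japaneseBracket x := zero_lt_one.trans_le (one_le_japaneseBracket x)
  rw [deriv_deriv_japaneseBracket]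
  positivity

lemma contDiff_deriv_deriv_japaneseBracket {n : ℕ∞ω} :
    ContDiff ℝ n (deriv (deriv japaneseBracket)) := by
  rw [deriv_deriv_japaneseBracket]
  exact (contDiff_japaneseBracket.pow 3).inv fun x =>
    pow_ne_zero 3 (zero_lt_one.trans_le (one_le_japaneseBracket x)).ne'

lemma integrable_deriv_deriv_japaneseBracket : Integrable (deriv (deriv japaneseBracket)) := by
  have hcont : Continuous (deriv (deriv japaneseBracket)) :=
    (contDiff_deriv_deriv_japaneseBracket (n := 0)).continuous
  refine integrable_inv_one_add_sq.mono' hcont.aestronglyMeasurable (ae_of_all _ fun x => ?_)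
  have hbracket := one_le_japaneseBracket x
  rw [Real.norm_of_nonneg (deriv_deriv_japaneseBracket_pos x).le, deriv_deriv_japaneseBracket]
  calc (japaneseBracket x ^ 3)⁻¹ ≤ (japaneseBracket x ^ 2)⁻¹ :=
        inv_anti₀ (by positivity) (pow_le_pow_right₀ hbracket (by norm_num))
    _ = (1 + x ^ 2)⁻¹ := by rw [japaneseBracket, Real.sq_sqrt (by positivity)]

lemma integral_deriv_deriv_japaneseBracket_pos : 0 < ∫ x, deriv (deriv japaneseBracket) x := by
  rw [integral_pos_iff_support_of_nonneg (fun x => (deriv_deriv_japaneseBracket_pos x).le)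
    integrable_deriv_deriv_japaneseBracket,
    Function.support_eq_univ fun x => (deriv_deriv_japaneseBracket_pos x).ne']
  simp

end JapaneseBracket

theorem isBigO_integral_abs {a τ : ℝ × ℝ → ℝ} (ha : ContDiffOn ℝ 1 a HalfPlane)
    (hτ : ContDiffOn ℝ 2 τ HalfPlane) {n : ℕ}
    (ha_per : ∀ s t : ℝ, 0 ≤ s → a (s, t + n) = a (s, t)) {d : ℝ}
    (hτ_per : ∀ s t : ℝ, 0 ≤ s → τ (s, t + n) = τ (s, t) + d)
    (hCR₁ : ∀ p ∈ HalfPlane, pds HalfPlane a p = pdt HalfPlane τ p)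
    (hCR₂ : ∀ p ∈ HalfPlane, pdt HalfPlane a p = -pds HalfPlane τ p)
    (hE : lambdaEnergy n a τ < ⊤) :
    (fun S => ∫ t in (0 : ℝ)..n, |a (S, t)|) =O[atTop] fun S => S := by
  have hdensity_nonneg {p : ℝ × ℝ} (hp : p ∈ HalfPlane) :
      0 ≤ deriv (deriv japaneseBracket) (a p) * jacobian a τ p :=
    mul_nonneg (deriv_deriv_japaneseBracket_pos _).le (jacobian_nonneg (hCR₁ p hp) (hCR₂ p hp))
  have hbracket := isBigO_integral_comp ha hτ ha_per hτ_per hCR₁ contDiff_japaneseBracket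
    fun S hS => by
      rw [abs_of_nonneg (intervalIntegral.integral_nonneg hS fun s hs =>
        intervalIntegral.integral_nonneg n.cast_nonneg fun t _ =>
          hdensity_nonneg (mem_halfPlane.2 hs.1))]
      exact integral_comp_mul_jacobian_le ha (hτ.of_le one_le_two) hCR₁ hCR₂ hE
        contDiff_deriv_deriv_japaneseBracket (fun x => (deriv_deriv_japaneseBracket_pos x).le)
        integral_deriv_deriv_japaneseBracket_pos hS
  refine IsBigO.trans (IsBigO.of_bound 1 ?_) hbracket
  filter_upwards [eventually_ge_atTop 0] with S hS
  have hslice : Continuous fun t => a (S, t) :=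
    ha.continuousOn.comp_continuous (by fun_prop) fun t => mem_halfPlane.2 hS
  have hmono : ∫ t in (0 : ℝ)..n, |a (S, t)| ≤ ∫ t in (0 : ℝ)..n, japaneseBracket (a (S, t)) :=
    intervalIntegral.integral_mono n.cast_nonneg (hslice.abs.intervalIntegrable _ _)
      (((contDiff_japaneseBracket (n := 0)).continuous.comp hslice).intervalIntegrable _ _)
      fun t => abs_le_japaneseBracket _
  rw [one_mul, Real.norm_of_nonneg
    (intervalIntegral.integral_nonneg n.cast_nonneg fun t _ => abs_nonneg _)]
  exact hmono.trans (le_abs_self _)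

section PeriodCoeff

variable {T : ℝ} {f : ℝ → ℂ}

/-- The `k`-th Fourier coefficient of a function of period `T`, without the factor `T⁻¹`. It is
an integral over `[0, T]` rather than Mathlib's `fourierCoeff` so that contour integrals can be
compared with it directly. -/
noncomputable def periodCoeff (T : ℝ) (f : ℝ → ℂ) (k : ℤ) : ℂ :=
  ∫ t in 0..T, exp (-(2 * π * k / T) * (t * I)) * f t

lemma periodCoeff_zero (k : ℤ) : periodCoeff T (fun _ => 0) k = 0 := by simp [periodCoeff]

lemma norm_periodCoeff_le (hT : 0 ≤ T) (f : ℝ → ℂ) (k : ℤ) :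
    ‖periodCoeff T f k‖ ≤ ∫ t in 0..T, ‖f t‖ := by
  refine (intervalIntegral.norm_integral_le_integral_norm hT).trans_eq ?_
  refine intervalIntegral.integral_congr fun t _ => ?_
  have hphase : -(2 * π * k / T) * (t * I) = ((-(2 * π * k / T) * t : ℝ) : ℂ) * I := by
    push_cast
    ring
  simp only [norm_mul, hphase, norm_exp_ofReal_mul_I, one_mul]

lemma periodCoeff_conj (f : ℝ → ℂ) (k : ℤ) :
    periodCoeff T (fun t => conj (f t)) k = conj (periodCoeff T f (-k)) := by
  simp only [periodCoeff, intervalIntegral.intervalIntegral_eq_integral_uIoc, real_smul, map_mul,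
    conj_ofReal, ← integral_conj, ← exp_conj]
  congr! 4
  simp [neg_div, conj_ofNat]

lemma periodCoeff_add {g : ℝ → ℂ} (hf : Continuous f) (hg : Continuous g) (k : ℤ) :
    periodCoeff T (fun t => f t + g t) k = periodCoeff T f k + periodCoeff T g k := by
  simp only [periodCoeff, mul_add]
  exact intervalIntegral.integral_add (Continuous.intervalIntegrable (by fun_prop) _ _)
    (Continuous.intervalIntegrable (by fun_prop) _ _)

lemma eq_periodCoeff_zero_div (hT : 0 < T) (hf : Continuous f) (hf_per : Function.Periodic f T)
    (hcoeff : ∀ k ≠ 0, periodCoeff T f k = 0) (t : ℝ) : f t = periodCoeff T f 0 / T := by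
  have : Fact (0 < T) := ⟨hT⟩
  let g : C(AddCircle T, ℂ) := ⟨hf_per.lift, continuous_coinduced_dom.2 hf⟩
  have hfourier (k : ℤ) : fourierCoeff g k = periodCoeff T f k / T := by
    rw [fourierCoeff_eq_intervalIntegral _ _ 0, zero_add, periodCoeff, real_smul, ofReal_div,
      Complex.ofReal_one, one_div_mul_eq_div]
    congr 1
    refine intervalIntegral.integral_congr fun t _ => ?_
    simp only [fourier_coe_apply, smul_eq_mul, Int.cast_neg]
    congr 2
    ring
  have hvanish (k : ℤ) (hk : k ≠ 0) : fourierCoeff g k = 0 := by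
    rw [hfourier, hcoeff k hk, zero_div]
  have hsum := has_pointwise_sum_fourier_series_of_summable
    (summable_of_ne_finset_zero (s := {0}) fun k hk => hvanish k (by simpa using hk))
    (t : AddCircle T)
  have hsum₀ := hasSum_single (f := fun k => fourierCoeff g k • fourier k (t : AddCircle T)) 0
    fun k hk => by rw [hvanish k hk, zero_smul]
  calc f t = fourierCoeff g 0 • fourier 0 (t : AddCircle T) := hsum.unique hsum₀
    _ = periodCoeff T f 0 / T := by rw [hfourier, fourier_zero, smul_eq_mul, mul_one]

end PeriodCoeff

section RightHalfPlane

variable {F : ℂ → ℂ} {T : ℝ}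

lemma mem_closure_re_pos {z : ℂ} (hz : 0 ≤ z.re) : z ∈ closure {z : ℂ | 0 < z.re} := by
  rwa [closure_setOfPred_lt_re]

lemma continuous_slice (hF : DiffContOnCl ℂ F {z | 0 < z.re}) {s : ℝ} (hs : 0 ≤ s) :
    Continuous fun t : ℝ => F (s + t * I) :=
  hF.continuousOn.comp_continuous (by fun_prop) fun t => mem_closure_re_pos (by simpa using hs)

/-- Cauchy's theorem on the rectangle `[0, s] × [0, T]`, whose horizontal sides cancel. -/
lemma integral_slice_eq (hF : DiffContOnCl ℂ F {z | 0 < z.re})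
    (hper : ∀ z, 0 ≤ z.re → F (z + T * I) = F z) {s : ℝ} (hs : 0 ≤ s) :
    ∫ t in 0..T, F (s + t * I) = ∫ t in 0..T, F (t * I) := by
  have hsides : ∫ x in 0..s, F (x + T * I) = ∫ x in 0..s, F x :=
    intervalIntegral.integral_congr fun x hx => hper x (by
      rw [uIcc_of_le hs] at hx
      exact hx.1)
  have hcauchy := integral_boundary_rect_eq_zero_of_continuousOn_of_differentiableOn F 0 (s + T * I)
    (hF.continuousOn.mono fun z hz => mem_closure_re_pos ?_)
    (hF.differentiableOn.mono fun z hz => ?_)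
  · simpa [hsides, ← mul_sub, sub_eq_zero] using hcauchy
  · have hre : 0 ≤ z.re ∧ z.re ≤ s := by simpa [uIcc_of_le hs] using hz.1
    exact hre.1
  · have hre : 0 < z.re ∧ z.re < s := by simpa [hs] using hz.1
    exact hre.1

lemma periodCoeff_slice (hF : DiffContOnCl ℂ F {z | 0 < z.re})
    (hper : ∀ z, 0 ≤ z.re → F (z + T * I) = F z) (hT : T ≠ 0) {s : ℝ} (hs : 0 ≤ s) (k : ℤ) :
    periodCoeff T (fun t => F (s + t * I)) k =
      exp (2 * π * k / T * s) * periodCoeff T (fun t => F (t * I)) k := by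
  set freq : ℂ := 2 * π * k / T with hfreq
  have hexp_per (z : ℂ) : exp (-freq * (z + T * I)) = exp (-freq * z) := by
    have : (T : ℂ) ≠ 0 := ofReal_ne_zero.2 hT
    refine exp_eq_exp_iff_exists_int.2 ⟨-k, ?_⟩
    rw [hfreq]
    push_cast
    field_simp
    ring
  have hslice := integral_slice_eq (F := fun z => exp (-freq * z) • F z)
    (DiffContOnCl.smul (Differentiable.diffContOnCl (by fun_prop)) hF)
    (fun z hz => congrArg₂ (· • ·) (hexp_per z) (hper z hz)) hs
  calc periodCoeff T (fun t => F (s + t * I)) k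
      = exp (freq * s) * ∫ t in 0..T, exp (-freq * (s + t * I)) * F (s + t * I) := by
        rw [periodCoeff, ← hfreq, ← intervalIntegral.integral_const_mul]
        refine intervalIntegral.integral_congr fun t _ => ?_
        rw [← mul_assoc (exp (freq * s)), ← exp_add]
        ring_nf
    _ = exp (freq * s) * periodCoeff T (fun t => F (t * I)) k := congrArg _ hslice

lemma periodCoeff_slice_add_conj (hF : DiffContOnCl ℂ F {z | 0 < z.re})
    (hper : ∀ z, 0 ≤ z.re → F (z + T * I) = F z) (hT : T ≠ 0)
    (hbdry : ∀ t : ℝ, (F (t * I)).re = 0) {s : ℝ} (hs : 0 ≤ s) (k : ℤ) :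
    periodCoeff T (fun t => F (s + t * I) + conj (F (s + t * I))) k =
      2 * sinh (2 * π * k / T * s) * periodCoeff T (fun t => F (t * I)) k := by
  have hmodes {s : ℝ} (hs : 0 ≤ s) :
      periodCoeff T (fun t => F (s + t * I) + conj (F (s + t * I))) k =
        exp (2 * π * k / T * s) * periodCoeff T (fun t => F (t * I)) k +
          exp (-(2 * π * k / T * s)) * conj (periodCoeff T (fun t => F (t * I)) (-k)) := by
    have hcont := continuous_slice hF hs
    rw [periodCoeff_add hcont (g := fun t => conj (F (s + t * I))) (continuous_conj.comp hcont),
      periodCoeff_conj, periodCoeff_slice hF hper hT hs, periodCoeff_slice hF hper hT hs, map_mul,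
      ← exp_conj]
    simp [neg_div, conj_ofNat]
  have hbdry_mode : conj (periodCoeff T (fun t => F (t * I)) (-k)) =
      -periodCoeff T (fun t => F (t * I)) k := by
    have hzero := hmodes le_rfl
    simp only [Complex.ofReal_zero, zero_add, add_conj, hbdry, mul_zero, neg_zero, exp_zero,
      one_mul, periodCoeff_zero] at hzero
    exact eq_neg_of_add_eq_zero_right hzero.symm
  rw [hmodes hs, hbdry_mode, sinh]
  ring

lemma nonpos_of_mul_sinh_le {b C : ℝ} (hb : 0 < b) {g : ℝ → ℝ}
    (hg : g =o[atTop] fun s => Real.exp (b * s))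
    (hle : ∀ s, 0 ≤ s → C * Real.sinh (b * s) ≤ g s) : C ≤ 0 := by
  have hexp : Tendsto (fun s => (Real.exp (b * s))⁻¹) atTop (𝓝 0) :=
    (Real.tendsto_exp_atTop.comp (tendsto_id.const_mul_atTop hb)).inv_tendsto_atTop
  have hlim : Tendsto (fun s => 2 * (g s / Real.exp (b * s)) + C * (Real.exp (b * s))⁻¹ ^ 2)
      atTop (𝓝 0) := by
    simpa using (hg.tendsto_div_nhds_zero.const_mul 2).add ((hexp.pow 2).const_mul C)
  refine ge_of_tendsto hlim ?_
  filter_upwards [eventually_ge_atTop 0] with s hs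
  have hs' := hle s hs
  rw [Real.sinh_eq, Real.exp_neg] at hs'
  field_simp at hs' ⊢
  linarith

/-- Since `Re F` vanishes on the imaginary axis, its Fourier modes along vertical lines grow like
`sinh (2π|k|s/T)`, which the growth condition forbids. -/
lemma periodCoeff_eq_zero (hT : 0 < T) (hF : DiffContOnCl ℂ F {z | 0 < z.re})
    (hper : ∀ z, 0 ≤ z.re → F (z + T * I) = F z) (hbdry : ∀ t : ℝ, (F (t * I)).re = 0)
    (hgrowth : (fun s : ℝ => ∫ t in 0..T, |(F (s + t * I)).re|) =o[atTop]
      fun s => Real.exp (2 * π / T * s)) {k : ℤ} (hk : k ≠ 0) :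
    periodCoeff T (fun t => F (t * I)) k = 0 := by
  set coeff := periodCoeff T (fun t => F (t * I)) k
  refine norm_le_zero_iff.1 (nonpos_of_mul_sinh_le (by positivity) hgrowth fun s hs => ?_)
  have hsinh : Real.sinh (2 * π / T * s) ≤ ‖sinh (2 * π * k / T * s)‖ := by
    have hk₁ : (1 : ℝ) ≤ |(k : ℝ)| := by exact_mod_cast Int.one_le_abs hk
    have hcast : sinh (2 * π * k / T * s) = (Real.sinh (2 * π / T * s * k) : ℝ) := by
      push_cast
      congr 1
      ring
    rw [hcast, norm_real, Real.norm_eq_abs, Real.abs_sinh, Real.sinh_le_sinh, abs_mul,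
      abs_of_nonneg (by positivity)]
    exact le_mul_of_one_le_right (by positivity) hk₁
  have hslice : 2 * (‖sinh (2 * π * k / T * s)‖ * ‖coeff‖) ≤
      2 * ∫ t in 0..T, |(F (s + t * I)).re| :=
    calc 2 * (‖sinh (2 * π * k / T * s)‖ * ‖coeff‖)
        = ‖periodCoeff T (fun t => F (s + t * I) + conj (F (s + t * I))) k‖ := by
          rw [periodCoeff_slice_add_conj hF hper hT.ne' hbdry hs, norm_mul, norm_mul, norm_ofNat,
            ← mul_assoc 2]
      _ ≤ ∫ t in 0..T, ‖F (s + t * I) + conj (F (s + t * I))‖ := norm_periodCoeff_le hT.le _ k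
      _ = 2 * ∫ t in 0..T, |(F (s + t * I)).re| := by
          simp only [add_conj, norm_real, Real.norm_eq_abs, abs_mul, abs_two,
            intervalIntegral.integral_const_mul]
  calc ‖coeff‖ * Real.sinh (2 * π / T * s) ≤ ‖coeff‖ * ‖sinh (2 * π * k / T * s)‖ := by gcongr
    _ = ‖sinh (2 * π * k / T * s)‖ * ‖coeff‖ := mul_comm _ _
    _ ≤ ∫ t in 0..T, |(F (s + t * I)).re| := le_of_mul_le_mul_left hslice two_pos

theorem eq_apply_zero_of_re_eq_zero (hT : 0 < T) (hF : DiffContOnCl ℂ F {z | 0 < z.re})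
    (hper : ∀ z, 0 ≤ z.re → F (z + T * I) = F z) (hbdry : ∀ t : ℝ, (F (t * I)).re = 0)
    (hgrowth : (fun s : ℝ => ∫ t in 0..T, |(F (s + t * I)).re|) =o[atTop]
      fun s => Real.exp (2 * π / T * s)) {z : ℂ} (hz : 0 ≤ z.re) : F z = F 0 := by
  have hconst {w : ℂ} (hw : 0 ≤ w.re) : F w = periodCoeff T (fun t => F (t * I)) 0 / T := by
    have hslice (k : ℤ) := periodCoeff_slice hF hper hT.ne' hw k
    have hslice_per : Function.Periodic (fun t : ℝ => F (w.re + t * I)) T := fun t => by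
      have hshift : (w.re : ℂ) + (t + T : ℝ) * I = w.re + t * I + T * I := by
        push_cast
        ring
      exact (congrArg F hshift).trans (hper _ (by simpa using hw))
    have hfourier := eq_periodCoeff_zero_div hT (continuous_slice hF hw) hslice_per
      (fun k hk => by rw [hslice, periodCoeff_eq_zero hT hF hper hbdry hgrowth hk, mul_zero]) w.im
    simpa [re_add_im, hslice] using hfourier
  rw [hconst hz, hconst (w := 0) (by simp)]

end RightHalfPlane

lemma diffContOnCl_of_cauchyRiemann {a τ : ℝ × ℝ → ℝ} (ha : DifferentiableOn ℝ a HalfPlane)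
    (hτ : DifferentiableOn ℝ τ HalfPlane)
    (hCR₁ : ∀ p ∈ HalfPlane, pds HalfPlane a p = pdt HalfPlane τ p)
    (hCR₂ : ∀ p ∈ HalfPlane, pdt HalfPlane a p = -pds HalfPlane τ p) :
    DiffContOnCl ℂ (fun z : ℂ => (a (z.re, z.im) : ℂ) + τ (z.re, z.im) * I) {z | 0 < z.re} := by
  refine ⟨fun z hz => DifferentiableAt.differentiableWithinAt ?_, ?_⟩
  · have hz' : (z.re, z.im) ∈ HalfPlane := mem_halfPlane.2 (le_of_lt hz)
    have hderiv {b : ℝ × ℝ → ℝ} (hb : DifferentiableOn ℝ b HalfPlane) :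
        HasFDerivAt (fun w : ℂ => (b (w.re, w.im) : ℂ))
          (ofRealCLM ∘L fderivWithin ℝ b HalfPlane (z.re, z.im) ∘L reCLM.prod imCLM) z :=
      ofRealCLM.hasFDerivAt.comp z (((hb _ hz').hasFDerivWithinAt.hasFDerivAt
        (halfPlane_mem_nhds hz)).comp z (reCLM.hasFDerivAt.prodMk imCLM.hasFDerivAt))
    have hsum := (hderiv ha).fun_add ((hderiv hτ).mul_const I)
    refine differentiableAt_complex_iff_differentiableAt_real.2 ⟨hsum.differentiableAt, ?_⟩
    rw [hsum.fderiv]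
    have h₁ := hCR₁ _ hz'
    have h₂ := hCR₂ _ hz'
    simp only [pds, pdt] at h₁ h₂
    apply Complex.ext <;> simp [h₁, h₂]
  · have hslice {b : ℝ × ℝ → ℝ} (hb : DifferentiableOn ℝ b HalfPlane) :
        ContinuousOn (fun w : ℂ => (b (w.re, w.im) : ℂ)) (closure {z | 0 < z.re}) :=
      continuous_ofReal.comp_continuousOn (hb.continuousOn.comp
        (continuous_re.prodMk continuous_im).continuousOn fun w hw => mem_halfPlane.2 (by
          rwa [closure_setOfPred_lt_re] at hw))
    exact (hslice ha).add ((hslice hτ).mul continuousOn_const)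

lemma isBigO_integral_abs_sub {a : ℝ × ℝ → ℝ} (ha : ContinuousOn a HalfPlane) {T : ℝ} (hT : 0 ≤ T)
    (c : ℝ) (hgrowth : (fun S => ∫ t in 0..T, |a (S, t)|) =O[atTop] fun S => S) :
    (fun S => ∫ t in 0..T, |a (S, t) - S - c|) =O[atTop] fun S => S := by
  have hconst : (fun _ : ℝ => |c|) =O[atTop] fun S => S := (isLittleO_const_id_atTop _).isBigO
  refine IsBigO.trans (IsBigO.of_bound 1 ?_)
    (hgrowth.add (((isBigO_refl _ _).add hconst).const_mul_left T))
  filter_upwards [eventually_ge_atTop 0] with S hS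
  have hslice : Continuous fun t => a (S, t) :=
    ha.comp_continuous (by fun_prop) fun t => mem_halfPlane.2 hS
  rw [one_mul, Real.norm_of_nonneg (intervalIntegral.integral_nonneg hT fun t _ => abs_nonneg _)]
  calc ∫ t in 0..T, |a (S, t) - S - c| ≤ ∫ t in 0..T, (|a (S, t)| + (S + |c|)) :=
        intervalIntegral.integral_mono hT
          (((hslice.sub continuous_const).sub continuous_const).abs.intervalIntegrable _ _)
          ((hslice.abs.add continuous_const).intervalIntegrable _ _) fun t => by
            linarith [abs_sub (a (S, t) - S) c, abs_sub (a (S, t)) S, abs_of_nonneg hS]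
    _ = (∫ t in 0..T, |a (S, t)|) + T * (S + |c|) := by
        rw [intervalIntegral.integral_add (hslice.abs.intervalIntegrable _ _)
          intervalIntegrable_const, intervalIntegral.integral_const, sub_zero, smul_eq_mul]
    _ ≤ _ := le_abs_self _

theorem normal_form {a τ : ℝ × ℝ → ℝ} (ha : ContDiffOn ℝ 1 a HalfPlane)
    (hτ : ContDiffOn ℝ 2 τ HalfPlane) {n : ℕ} (hn : 1 ≤ n)
    (ha_per : ∀ s t : ℝ, 0 ≤ s → a (s, t + n) = a (s, t))
    (hτ_per : ∀ s t : ℝ, 0 ≤ s → τ (s, t + n) = τ (s, t) + n)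
    (hCR₁ : ∀ p ∈ HalfPlane, pds HalfPlane a p = pdt HalfPlane τ p)
    (hCR₂ : ∀ p ∈ HalfPlane, pdt HalfPlane a p = -pds HalfPlane τ p)
    {c : ℝ} (hbdry : ∀ t : ℝ, a (0, t) = c) (hE : lambdaEnergy n a τ < ⊤)
    {p : ℝ × ℝ} (hp : p ∈ HalfPlane) : a p = p.1 + c ∧ τ p = p.2 + τ (0, 0) := by
  have hn₀ : (0 : ℝ) < n := by exact_mod_cast hn
  set G : ℂ → ℂ := fun z => (a (z.re, z.im) : ℂ) + τ (z.re, z.im) * I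
  have hG : DiffContOnCl ℂ G {z | 0 < z.re} := diffContOnCl_of_cauchyRiemann
    (ha.differentiableOn one_ne_zero) (hτ.differentiableOn two_ne_zero) hCR₁ hCR₂
  have hgrowth : (fun s : ℝ => ∫ t in (0 : ℝ)..n, |(G (s + t * I) - (s + t * I) - c).re|) =o[atTop]
      fun s => Real.exp (2 * π / n * s) := by
    have hlinear : (fun S : ℝ => S) =o[atTop] fun s => Real.exp (2 * π / n * s) := by
      simpa using isLittleO_pow_exp_pos_mul_atTop 1 (b := 2 * π / n) (by positivity)
    simpa [G] using (isBigO_integral_abs_sub ha.continuousOn hn₀.le c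
      (isBigO_integral_abs ha hτ ha_per hτ_per hCR₁ hCR₂ hE)).trans_isLittleO hlinear
  have hconst := eq_apply_zero_of_re_eq_zero (F := fun z => G z - z - c) (z := p.1 + p.2 * I) hn₀
    ((hG.sub differentiable_id.diffContOnCl).sub_const c)
    (fun z hz => by
      simp only [G, add_re, mul_re, ofReal_re, I_re, ofReal_im, I_im, add_im, mul_im, mul_zero,
        sub_zero, add_zero, mul_one, ha_per _ _ hz, hτ_per _ _ hz]
      push_cast
      ring)
    (fun t => by simp [G, hbdry]) hgrowth (by simpa using mem_halfPlane.1 hp)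
  have hre : a p - p.1 - c = 0 := by simpa [G, hbdry] using congrArg Complex.re hconst
  have him : τ p - p.2 = τ (0, 0) := by simpa [G, hbdry] using congrArg Complex.im hconst
  exact ⟨by linarith, by linarith⟩

section NormalForm

variable {a τ : ℝ × ℝ → ℝ} {a₀ τ₀ : ℝ} {p : ℝ × ℝ}

lemma hasFDerivWithinAt_of_eq_fst_add (ha : ∀ p ∈ HalfPlane, a p = p.1 + a₀)
    (hp : p ∈ HalfPlane) :
    HasFDerivWithinAt a (ContinuousLinearMap.fst ℝ ℝ ℝ) HalfPlane p :=
  ((ContinuousLinearMap.fst ℝ ℝ ℝ).hasFDerivWithinAt.add_const a₀).congr ha (ha p hp)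

lemma hasFDerivWithinAt_of_eq_snd_add (hτ : ∀ p ∈ HalfPlane, τ p = p.2 + τ₀)
    (hp : p ∈ HalfPlane) :
    HasFDerivWithinAt τ (ContinuousLinearMap.snd ℝ ℝ ℝ) HalfPlane p :=
  ((ContinuousLinearMap.snd ℝ ℝ ℝ).hasFDerivWithinAt.add_const τ₀).congr hτ (hτ p hp)

lemma jacobian_eq_one (ha : ∀ p ∈ HalfPlane, a p = p.1 + a₀)
    (hτ : ∀ p ∈ HalfPlane, τ p = p.2 + τ₀) (hp : p ∈ HalfPlane) : jacobian a τ p = 1 := by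
  have ha' := hasFDerivWithinAt_of_eq_fst_add ha hp
  have hτ' := hasFDerivWithinAt_of_eq_snd_add hτ hp
  simp [jacobian, pds_of_hasFDerivWithinAt ha' hp, pdt_of_hasFDerivWithinAt ha' hp,
    pdt_of_hasFDerivWithinAt hτ' hp]

lemma lintegral_Ici_prod_Ioc_comp_fst {f : ℝ → ℝ≥0∞} (hf : Measurable f) (n : ℕ) :
    ∫⁻ p in Ici (0 : ℝ) ×ˢ Ioc (0 : ℝ) n, f p.1 = (∫⁻ s in Ici 0, f s) * n := by
  rw [Measure.volume_eq_prod, ← Measure.prod_restrict]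
  simpa using lintegral_prod_mul (μ := volume.restrict (Ici (0 : ℝ)))
    (ν := volume.restrict (Ioc (0 : ℝ) n)) (g := 1) hf.aemeasurable aemeasurable_const

lemma lintegral_comp_add_eq_one {ψ : ℝ → ℝ} (hψ : ∀ x, 0 ≤ ψ x) (hψ_int : ∫ x, ψ x = 1)
    (c : ℝ) : ∫⁻ s, ENNReal.ofReal (ψ (s + c)) = 1 := by
  have hint : Integrable ψ := not_imp_comm.1 integral_undef (by simp [hψ_int])
  rw [lintegral_add_right_eq_self (fun x => ENNReal.ofReal (ψ x)),
    ← ofReal_integral_eq_lintegral_ofReal hint (.of_forall hψ), hψ_int, ENNReal.ofReal_one]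

theorem iSup_lintegral_Ici_comp_add_eq_one (c : ℝ) :
    ⨆ ψ ∈ {ψ : ℝ → ℝ | ContDiff ℝ (⊤ : ℕ∞) ψ ∧ (∀ x, 0 ≤ ψ x) ∧ ∫ x : ℝ, ψ x = 1},
      ∫⁻ s in Ici 0, ENNReal.ofReal (ψ (s + c)) = 1 := by
  refine le_antisymm (iSup₂_le fun ψ ⟨_, hψ, hψ_int⟩ => ?_) ?_
  · exact (setLIntegral_le_lintegral _ _).trans (lintegral_comp_add_eq_one hψ hψ_int c).le
  · let bump : ContDiffBump (c + 1) := ⟨1 / 2, 1, by norm_num, by norm_num⟩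
    refine le_iSup₂_of_le (bump.normed volume)
      ⟨bump.contDiff_normed, bump.nonneg_normed, bump.integral_normed⟩ ?_
    have hsupp : Function.support (fun s => ENNReal.ofReal (bump.normed volume (s + c))) ⊆
        Ici 0 := fun s hs => by
      have hs' : s + c ∈ Function.support (bump.normed volume) := fun h => hs (by simp [h])
      rw [bump.support_normed_eq, Real.ball_eq_Ioo] at hs'
      rw [mem_Ici]
      linarith [show c + 1 - 1 < s + c from hs'.1]
    rw [setLIntegral_eq_of_support_subset hsupp,
      lintegral_comp_add_eq_one bump.nonneg_normed bump.integral_normed]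

theorem lambdaEnergy_of_normal_form (ha : ∀ p ∈ HalfPlane, a p = p.1 + a₀)
    (hτ : ∀ p ∈ HalfPlane, τ p = p.2 + τ₀) (n : ℕ) : lambdaEnergy n a τ = n := by
  have hval {ψ : ℝ → ℝ} (hψ : Continuous ψ) :
      ∫⁻ p in Ici (0 : ℝ) ×ˢ Ioc (0 : ℝ) n, ENNReal.ofReal (ψ (a p) * jacobian a τ p) =
        (∫⁻ s in Ici 0, ENNReal.ofReal (ψ (s + a₀))) * n := by
    rw [← lintegral_Ici_prod_Ioc_comp_fst (by fun_prop)]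
    refine setLIntegral_congr_fun (measurableSet_Ici.prod measurableSet_Ioc) fun p hp => ?_
    have hp' : p ∈ HalfPlane := mem_halfPlane.2 hp.1
    simp only [ha p hp', jacobian_eq_one ha hτ hp', mul_one]
  calc lambdaEnergy n a τ
      = ⨆ ψ ∈ {ψ : ℝ → ℝ | ContDiff ℝ (⊤ : ℕ∞) ψ ∧ (∀ x, 0 ≤ ψ x) ∧ ∫ x : ℝ, ψ x = 1},
          (∫⁻ s in Ici 0, ENNReal.ofReal (ψ (s + a₀))) * n :=
        biSup_congr fun ψ hψ => hval hψ.1.continuous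
    _ = 1 * n := by
        rw [← iSup_lintegral_Ici_comp_add_eq_one a₀]
        simp only [ENNReal.iSup_mul]
    _ = n := one_mul _

end NormalForm

section OmegaEnergy

variable {H : ℝ → ℂ → ℝ} {τ : ℝ × ℝ → ℝ} {z : ℝ × ℝ → ℂ} {p : ℝ × ℝ}

/-- The integrand of the `ω`-energy, i.e. the density of `dx ∧ dy + dτ ∧ d(H(τ, z))`. -/
noncomputable def omegaDensity (H : ℝ → ℂ → ℝ) (τ : ℝ × ℝ → ℝ) (z : ℝ × ℝ → ℂ) (p : ℝ × ℝ) : ℝ :=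
  (pds HalfPlane (fun q => (z q).re) p * pdt HalfPlane (fun q => (z q).im) p -
    pdt HalfPlane (fun q => (z q).re) p * pds HalfPlane (fun q => (z q).im) p) +
  (pds HalfPlane τ p * pdt HalfPlane (fun q => H (τ q) (z q)) p -
    pdt HalfPlane τ p * pds HalfPlane (fun q => H (τ q) (z q)) p)

lemma fderiv_apply_eq_im_conj_mul_XH (H : ℝ → ℂ → ℝ) (t : ℝ) (w v : ℂ) :
    fderiv ℝ (H t) w v = (conj v * XH H t w).im := by
  have hv : v = v.re • (1 : ℂ) + v.im • I := by simp
  calc fderiv ℝ (H t) w v = v.re * fderiv ℝ (H t) w 1 + v.im * fderiv ℝ (H t) w I := by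
        conv_lhs => rw [hv, map_add, map_smul, map_smul, smul_eq_mul, smul_eq_mul]
    _ = (conj v * XH H t w).im := by simp [XH]

lemma fderiv_uncurry_apply (hH : Differentiable ℝ fun q : ℝ × ℂ => H q.1 q.2) (t : ℝ) (w : ℂ)
    (r : ℝ) (v : ℂ) :
    fderiv ℝ (fun q : ℝ × ℂ => H q.1 q.2) (t, w) (r, v) =
      r * fderiv ℝ (fun q : ℝ × ℂ => H q.1 q.2) (t, w) (1, 0) + (conj v * XH H t w).im := by
  have hslice : HasFDerivAt (H t) _ w :=
    (hH (t, w)).hasFDerivAt.comp w (hasFDerivAt_prodMk_right t w)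
  have hsplit : (r, v) = r • ((1 : ℝ), (0 : ℂ)) + (0, v) := by simp
  rw [← fderiv_apply_eq_im_conj_mul_XH, hslice.fderiv, hsplit, map_add, map_smul, smul_eq_mul]
  simp

/-- The `∂_t H` contributions to the two partial derivatives of `H(τ, z)` cancel. -/
theorem omegaDensity_eq_im (hH : Differentiable ℝ fun q : ℝ × ℂ => H q.1 q.2)
    (hτ : DifferentiableWithinAt ℝ τ HalfPlane p) (hz : DifferentiableWithinAt ℝ z HalfPlane p)
    (hp : p ∈ HalfPlane) :
    omegaDensity H τ z p =
      (conj (pds HalfPlane z p - pds HalfPlane τ p * XH H (τ p) (z p)) *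
        (pdt HalfPlane z p - pdt HalfPlane τ p * XH H (τ p) (z p))).im := by
  have hre := reCLM.hasFDerivAt.comp_hasFDerivWithinAt p hz.hasFDerivWithinAt
  have him := imCLM.hasFDerivAt.comp_hasFDerivWithinAt p hz.hasFDerivWithinAt
  have hHτz := (hH (τ p, z p)).hasFDerivAt.comp_hasFDerivWithinAt p
    (hτ.hasFDerivWithinAt.prodMk hz.hasFDerivWithinAt)
  have hs : pds HalfPlane (fun q => H (τ q) (z q)) p =
      pds HalfPlane τ p * fderiv ℝ (fun q : ℝ × ℂ => H q.1 q.2) (τ p, z p) (1, 0) +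
        (conj (pds HalfPlane z p) * XH H (τ p) (z p)).im :=
    (pds_of_hasFDerivWithinAt hHτz hp).trans (fderiv_uncurry_apply hH _ _ _ _)
  have ht : pdt HalfPlane (fun q => H (τ q) (z q)) p =
      pdt HalfPlane τ p * fderiv ℝ (fun q : ℝ × ℂ => H q.1 q.2) (τ p, z p) (1, 0) +
        (conj (pdt HalfPlane z p) * XH H (τ p) (z p)).im :=
    (pdt_of_hasFDerivWithinAt hHτz hp).trans (fderiv_uncurry_apply hH _ _ _ _)
  have hre_s : pds HalfPlane (fun q => (z q).re) p = (pds HalfPlane z p).re :=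
    pds_of_hasFDerivWithinAt hre hp
  have hre_t : pdt HalfPlane (fun q => (z q).re) p = (pdt HalfPlane z p).re :=
    pdt_of_hasFDerivWithinAt hre hp
  have him_s : pds HalfPlane (fun q => (z q).im) p = (pds HalfPlane z p).im :=
    pds_of_hasFDerivWithinAt him hp
  have him_t : pdt HalfPlane (fun q => (z q).im) p = (pdt HalfPlane z p).im :=
    pdt_of_hasFDerivWithinAt him hp
  rw [omegaDensity, hre_s, hre_t, him_s, him_t, hs, ht]
  simp only [mul_im, mul_re, conj_re, conj_im, sub_re, sub_im, ofReal_re, ofReal_im]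
  ring

lemma im_conj_mul_eq_of_add_I_mul_eq_zero {u v : ℂ} (h : u + I * v = 0) :
    (conj u * v).im = (‖u‖ ^ 2 + ‖v‖ ^ 2) / 2 := by
  have hu : u = -(I * v) := eq_neg_of_add_eq_zero_left h
  simp only [hu, Complex.sq_norm, normSq_apply, neg_re, neg_im, mul_re, mul_im, conj_re, conj_im,
    I_re, I_im]
  ring

theorem omegaDensity_eq_half_norm_sq (hH : Differentiable ℝ fun q : ℝ × ℂ => H q.1 q.2)
    (hτ : DifferentiableWithinAt ℝ τ HalfPlane p) (hz : DifferentiableWithinAt ℝ z HalfPlane p)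
    (hp : p ∈ HalfPlane)
    (hfloer : (pds HalfPlane z p - pds HalfPlane τ p * XH H (τ p) (z p)) +
      I * (pdt HalfPlane z p - pdt HalfPlane τ p * XH H (τ p) (z p)) = 0) :
    omegaDensity H τ z p = (‖pds HalfPlane z p - pds HalfPlane τ p * XH H (τ p) (z p)‖ ^ 2 +
      ‖pdt HalfPlane z p - pdt HalfPlane τ p * XH H (τ p) (z p)‖ ^ 2) / 2 := by
  rw [omegaDensity_eq_im hH hτ hz hp, im_conj_mul_eq_of_add_I_mul_eq_zero hfloer]

theorem omegaEnergy_eq_floerEnergy (hH : Differentiable ℝ fun q : ℝ × ℂ => H q.1 q.2) {τ₀ : ℝ}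
    (hτ : ∀ p ∈ HalfPlane, τ p = p.2 + τ₀) (hz : DifferentiableOn ℝ z HalfPlane)
    (hfloer : ∀ p ∈ HalfPlane,
      pds HalfPlane z p + I * (pdt HalfPlane z p - XH H (p.2 + τ₀) (z p)) = 0) (n : ℕ) :
    omegaEnergy H n τ z = floerEnergy H n τ₀ z := by
  rw [floerEnergy, ← lintegral_const_mul' _ _ (by simp)]
  refine setLIntegral_congr_fun (measurableSet_Ici.prod measurableSet_Ioc) fun p hp => ?_
  have hp' : p ∈ HalfPlane := mem_halfPlane.2 hp.1
  have hτ' := hasFDerivWithinAt_of_eq_snd_add hτ hp'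
  have hτs : pds HalfPlane τ p = 0 := by simp [pds_of_hasFDerivWithinAt hτ' hp']
  have hτt : pdt HalfPlane τ p = 1 := by simp [pdt_of_hasFDerivWithinAt hτ' hp']
  have hdensity := omegaDensity_eq_half_norm_sq hH hτ'.differentiableWithinAt (hz p hp') hp'
    (by simpa [hτs, hτt, hτ p hp'] using hfloer p hp')
  simp only [hτs, hτt, hτ p hp', Complex.ofReal_zero, Complex.ofReal_one, zero_mul, sub_zero,
    one_mul] at hdensity
  calc ENNReal.ofReal (omegaDensity H τ z p) = _ := congrArg ENNReal.ofReal hdensity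
    _ = _ := by
      rw [div_eq_inv_mul, ENNReal.ofReal_mul (by norm_num), ENNReal.ofReal_inv_of_pos two_pos,
        ENNReal.ofReal_ofNat, one_div]

end OmegaEnergy

theorem lambda_energy_eq_and_omega_eq_floer_general
    {H : ℝ → ℂ → ℝ} (hH : Differentiable ℝ fun p : ℝ × ℂ => H p.1 p.2) {n : ℕ} (hn : 1 ≤ n)
    {a τ : ℝ × ℝ → ℝ} {z : ℝ × ℝ → ℂ} {c : ℝ}
    (ha : ContDiffOn ℝ 1 a HalfPlane) (hτ : ContDiffOn ℝ 2 τ HalfPlane)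
    (hz : DifferentiableOn ℝ z HalfPlane)
    (ha_per : ∀ s t : ℝ, 0 ≤ s → a (s, t + n) = a (s, t))
    (hτ_per : ∀ s t : ℝ, 0 ≤ s → τ (s, t + n) = τ (s, t) + n)
    (hCR₁ : ∀ p ∈ HalfPlane, pds HalfPlane a p = pdt HalfPlane τ p)
    (hCR₂ : ∀ p ∈ HalfPlane, pdt HalfPlane a p = -pds HalfPlane τ p)
    (hdisk_eq : ∀ p ∈ HalfPlane,
      pdt HalfPlane a p * XH H (τ p) (z p) + pds HalfPlane z p +
        I * (pdt HalfPlane z p - pdt HalfPlane τ p * XH H (τ p) (z p)) = 0)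
    (hbdry_a : ∀ t : ℝ, a (0, t) = c) (hElambda : lambdaEnergy n a τ < ⊤) :
    lambdaEnergy n a τ = n ∧
    ∃ a₀ τ₀ : ℝ,
      (∀ p ∈ HalfPlane, a p = p.1 + a₀ ∧ τ p = p.2 + τ₀) ∧
      omegaEnergy H n τ z = floerEnergy H n τ₀ z := by
  have hnormal (p : ℝ × ℝ) (hp : p ∈ HalfPlane) : a p = p.1 + c ∧ τ p = p.2 + τ (0, 0) :=
    normal_form ha hτ hn ha_per hτ_per hCR₁ hCR₂ hbdry_a hElambda hp
  have ha_eq (p : ℝ × ℝ) (hp : p ∈ HalfPlane) := (hnormal p hp).1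
  have hτ_eq (p : ℝ × ℝ) (hp : p ∈ HalfPlane) := (hnormal p hp).2
  refine ⟨lambdaEnergy_of_normal_form ha_eq hτ_eq n, c, τ (0, 0), hnormal,
    omegaEnergy_eq_floerEnergy hH hτ_eq hz (fun p hp => ?_) n⟩
  have hat : pdt HalfPlane a p = 0 := by
    simp [pdt_of_hasFDerivWithinAt (hasFDerivWithinAt_of_eq_fst_add ha_eq hp) hp]
  have hτt : pdt HalfPlane τ p = 1 := by
    simp [pdt_of_hasFDerivWithinAt (hasFDerivWithinAt_of_eq_snd_add hτ_eq hp) hp]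
  simpa [hat, hτt, hτ_eq p hp] using hdisk_eq p hp

/-- **For a finite `λ`-energy half cylinder of period `n` one has `E_λ = n`, and
(in the normal form `a = s + a₀`, `τ = t + τ₀`) the `ω`-energy equals the Floer
energy of the disk component.** -/
theorem lambda_energy_eq_and_omega_eq_floer
    (H : ℝ → ℂ → ℝ) (hH : IsAdmissible H) (n : ℕ) (hn : 1 ≤ n)
    (a τ : ℝ × ℝ → ℝ) (z : ℝ × ℝ → ℂ) (c : ℝ)
    (ha_smooth : ContDiffOn ℝ (⊤ : ℕ∞) a HalfPlane)
    (hτ_smooth : ContDiffOn ℝ (⊤ : ℕ∞) τ HalfPlane)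
    (hz_smooth : ContDiffOn ℝ (⊤ : ℕ∞) z HalfPlane)
    (hz_disk : ∀ p ∈ HalfPlane, z p ∈ Disk)
    (ha_per : ∀ s t : ℝ, 0 ≤ s → a (s, t + n) = a (s, t))
    (hτ_per : ∀ s t : ℝ, 0 ≤ s → τ (s, t + n) = τ (s, t) + n)
    (hz_per : ∀ s t : ℝ, 0 ≤ s → z (s, t + n) = z (s, t))
    (hCR₁ : ∀ p ∈ HalfPlane, pds HalfPlane a p = pdt HalfPlane τ p)
    (hCR₂ : ∀ p ∈ HalfPlane, pdt HalfPlane a p = -pds HalfPlane τ p)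
    (hdisk_eq : ∀ p ∈ HalfPlane,
      Complex.ofReal (pdt HalfPlane a p) * XH H (τ p) (z p) + pds HalfPlane z p +
        Complex.I * (pdt HalfPlane z p -
          Complex.ofReal (pdt HalfPlane τ p) * XH H (τ p) (z p)) = 0)
    (hbdry_a : ∀ t : ℝ, a (0, t) = c)
    (hbdry_z : ∀ t : ℝ, ‖z (0, t)‖ = 1)
    (hElambda : lambdaEnergy n a τ < ⊤) :
    lambdaEnergy n a τ = (n : ℝ≥0∞) ∧
    ∃ a₀ τ₀ : ℝ,
      (∀ p ∈ HalfPlane, a p = p.1 + a₀ ∧ τ p = p.2 + τ₀) ∧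
      omegaEnergy H n τ z = floerEnergy H n τ₀ z :=
  lambda_energy_eq_and_omega_eq_floer_general (hH.smooth.differentiable (by simp)) hn
    (ha_smooth.of_le ENat.LEInfty.out) (hτ_smooth.of_le ENat.LEInfty.out)
    (hz_smooth.differentiableOn (by simp)) ha_per hτ_per hCR₁ hCR₂ hdisk_eq hbdry_a hElambda
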